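/- For every positive integer n, the number of decompositions of n equals the product, over all odd primes p dividing n, of (e_p + 1), where e_p is the exponent of p in the prime factorization of n. -/

import Mathlib

/-- `IsDecomp n a m` means the `m` consecutive positive integers
`a+1, a+2, …, a+m` form a decomposition of `n`. -/
def IsDecomp (n a m : ℕ) : Prop :=
  1 ≤ m ∧ (Finset.range m).sum (fun i => a + i + 1) = n

/-!
Summing the progression, `a + 1, …, a + m` is a decomposition of `n` iff
`m * (2 * a + m + 1) = 2 * n`. The two factors have opposite parity, so exactly one of them
is odd, and it divides `n`. Conversely, an odd divisor `d` of `n` determines the factorization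
`2 * n = d * (2 * n / d)` into factors of opposite parity; the smaller one has to be `m`, and the
difference of the two is `2 * a + 1`. Hence decompositions of `n` correspond to its odd divisors,
that is, to the divisors of the odd part of `n`.
-/

theorem two_mul_sum_range_add_add_one {R : Type*} [CommSemiring R] (a : R) (m : ℕ) :
    2 * ∑ i ∈ Finset.range m, (a + i + 1) = m * (2 * a + m + 1) := by
  induction m with
  | zero => simp
  | succ m ih =>
    rw [Finset.sum_range_succ, mul_add, ih]
    push_cast
    ring

theorem isDecomp_iff {n a m : ℕ} :
    IsDecomp n a m ↔ 0 < m ∧ m * (2 * a + m + 1) = 2 * n := by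
  have hsum : 2 * ∑ i ∈ Finset.range m, (a + i + 1) = m * (2 * a + m + 1) :=
    two_mul_sum_range_add_add_one a m
  rw [IsDecomp, ← hsum, Nat.succ_le_iff, Nat.mul_right_inj two_ne_zero]

/-- The odd one among the two factors `m` and `2 * a + m + 1` of `2 * n`, where
`a + 1, …, a + m` is a decomposition of `n`. -/
def oddFactor (a m : ℕ) : ℕ :=
  if Odd m then m else 2 * a + m + 1

theorem oddFactor_of_odd {a m : ℕ} (hm : Odd m) : oddFactor a m = m :=
  if_pos hm

theorem oddFactor_of_even {a m : ℕ} (hm : Even m) : oddFactor a m = 2 * a + m + 1 :=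
  if_neg (Nat.not_odd_iff_even.mpr hm)

theorem odd_oddFactor (a m : ℕ) : Odd (oddFactor a m) := by
  rcases Nat.even_or_odd m with hm | hm
  · rw [oddFactor_of_even hm]
    exact ((even_two_mul a).add hm).add_one
  · rwa [oddFactor_of_odd hm]

namespace IsDecomp

variable {n a b m : ℕ}

theorem ne_zero (h : IsDecomp n a m) : n ≠ 0 := by
  obtain ⟨hm, hmul⟩ := isDecomp_iff.mp h
  have : 0 < m * (2 * a + m + 1) := by positivity
  omega

theorem oddFactor_dvd (h : IsDecomp n a m) : oddFactor a m ∣ n := by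
  obtain ⟨-, hmul⟩ := isDecomp_iff.mp h
  have hdvd : oddFactor a m ∣ 2 * n := by
    rcases Nat.even_or_odd m with hm | hm
    · rw [oddFactor_of_even hm]
      exact Dvd.intro_left m hmul
    · rw [oddFactor_of_odd hm]
      exact Dvd.intro _ hmul
  exact (odd_oddFactor a m).coprime_two_right.dvd_of_dvd_mul_left hdvd

theorem length_eq_min (h : IsDecomp n a m) :
    m = min (oddFactor a m) (2 * n / oddFactor a m) := by
  obtain ⟨hpos, hmul⟩ := isDecomp_iff.mp h
  rcases Nat.even_or_odd m with hm | hm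
  · rw [oddFactor_of_even hm, ← hmul, Nat.mul_div_cancel _ (by omega), min_eq_right (by omega)]
  · rw [oddFactor_of_odd hm, ← hmul, Nat.mul_div_cancel_left _ hpos, min_eq_left (by omega)]

theorem start_unique (ha : IsDecomp n a m) (hb : IsDecomp n b m) : a = b := by
  obtain ⟨hm, hmul_a⟩ := isDecomp_iff.mp ha
  obtain ⟨-, hmul_b⟩ := isDecomp_iff.mp hb
  have := Nat.eq_of_mul_eq_mul_left hm (hmul_a.trans hmul_b.symm)
  omega

end IsDecomp

theorem exists_isDecomp_oddFactor_eq {n d : ℕ} (hn : n ≠ 0) (hd : Odd d) (hdvd : d ∣ n) :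
    ∃ a m, IsDecomp n a m ∧ oddFactor a m = d := by
  obtain ⟨c, rfl⟩ := hdvd
  have hc : 0 < c := Nat.pos_of_ne_zero (right_ne_zero_of_mul hn)
  obtain ⟨t, ht⟩ := id hd
  rcases lt_or_ge d (2 * c) with hlt | hge
  · obtain ⟨a, ha⟩ : ∃ a, 2 * a + d + 1 = 2 * c := ⟨c - t - 1, by omega⟩
    refine ⟨a, d, isDecomp_iff.mpr ⟨hd.pos, ?_⟩, oddFactor_of_odd hd⟩
    rw [ha, mul_left_comm]
  · obtain ⟨a, ha⟩ : ∃ a, 2 * a + 2 * c + 1 = d := ⟨t - c, by omega⟩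
    refine ⟨a, 2 * c, isDecomp_iff.mpr ⟨by omega, ?_⟩, ?_⟩
    · rw [ha, mul_right_comm, mul_assoc]
    · rw [oddFactor_of_even (even_two_mul c), ha]

theorem bijOn_oddFactor (n : ℕ) :
    Set.BijOn (fun p : ℕ × ℕ ↦ oddFactor p.1 p.2) {p | IsDecomp n p.1 p.2}
      (n.divisors.filter Odd) := by
  refine ⟨?mapsTo, ?injOn, ?surjOn⟩
  case mapsTo =>
    rintro ⟨a, m⟩ h
    exact Finset.mem_filter.mpr
      ⟨Nat.mem_divisors.mpr ⟨h.oddFactor_dvd, h.ne_zero⟩, odd_oddFactor a m⟩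
  case injOn =>
    rintro ⟨a, m⟩ (ha : IsDecomp n a m) ⟨b, k⟩ (hb : IsDecomp n b k)
      (heq : oddFactor a m = oddFactor b k)
    obtain rfl : m = k := calc
      m = min (oddFactor a m) (2 * n / oddFactor a m) := ha.length_eq_min
      _ = min (oddFactor b k) (2 * n / oddFactor b k) := by rw [heq]
      _ = k := hb.length_eq_min.symm
    rw [ha.start_unique hb]
  case surjOn =>
    intro d hd
    obtain ⟨hmem, hodd⟩ := Finset.mem_filter.mp hd
    obtain ⟨hdvd, hn⟩ := Nat.mem_divisors.mp hmem
    obtain ⟨a, m, h, heq⟩ := exists_isDecomp_oddFactor_eq hn hodd hdvd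
    exact ⟨(a, m), h, heq⟩

theorem ncard_isDecomp_eq_card_odd_divisors (n : ℕ) :
    {p : ℕ × ℕ | IsDecomp n p.1 p.2}.ncard = (n.divisors.filter Odd).card := by
  rw [(bijOn_oddFactor n).ncard_eq, Set.ncard_coe_finset]

theorem divisors_filter_not_dvd {p : ℕ} (hp : p.Prime) (n : ℕ) :
    n.divisors.filter (¬p ∣ ·) = (ordCompl[p] n).divisors := by
  rcases eq_or_ne n 0 with rfl | hn
  · simp
  ext d
  rw [Finset.mem_filter, Nat.mem_divisors, Nat.mem_divisors]
  constructor
  · rintro ⟨⟨hdn, -⟩, hpd⟩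
    exact ⟨Nat.dvd_ordCompl_of_dvd_not_dvd hdn hpd, (Nat.ordCompl_pos p hn).ne'⟩
  · rintro ⟨hd, -⟩
    exact ⟨⟨hd.trans (Nat.ordCompl_dvd n p), hn⟩,
      fun hpd ↦ Nat.not_dvd_ordCompl hp hn (hpd.trans hd)⟩

theorem primeFactors_ordCompl (n p : ℕ) :
    (ordCompl[p] n).primeFactors = n.primeFactors.filter (· ≠ p) := by
  rw [← Nat.support_factorization, Nat.factorization_ordCompl, Finsupp.support_erase,
    Nat.support_factorization, Finset.filter_ne']

theorem card_divisors_filter_not_dvd {n p : ℕ} (hn : n ≠ 0) (hp : p.Prime) :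
    (n.divisors.filter (¬p ∣ ·)).card =
      ∏ q ∈ n.primeFactors.filter (· ≠ p), (n.factorization q + 1) := by
  rw [divisors_filter_not_dvd hp, Nat.card_divisors (Nat.ordCompl_pos p hn).ne',
    primeFactors_ordCompl]
  refine Finset.prod_congr rfl fun q hq ↦ ?_
  rw [Nat.factorization_ordCompl, Finsupp.erase_ne (Finset.mem_filter.mp hq).2]

/-- For every positive integer `n`, the number of decompositions of `n` equals
the product, over all odd primes `p` dividing `n`, of `e_p + 1`, where `e_p`
is the exponent of `p` in the prime factorization of `n`. -/
theorem card_decompositions_eq_prod (n : ℕ) (hn : 0 < n) :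
    {p : ℕ × ℕ | IsDecomp n p.1 p.2}.ncard =
      (n.primeFactors.filter (fun p => p ≠ 2)).prod (fun p => n.factorization p + 1) := by
  calc {p : ℕ × ℕ | IsDecomp n p.1 p.2}.ncard
    _ = (n.divisors.filter Odd).card := ncard_isDecomp_eq_card_odd_divisors n
    _ = (n.divisors.filter (¬2 ∣ ·)).card := by
      simp only [← Nat.not_even_iff_odd, even_iff_two_dvd]
    _ = ∏ p ∈ n.primeFactors.filter (· ≠ 2), (n.factorization p + 1) :=
      card_divisors_filter_not_dvd hn.ne' Nat.prime_two
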